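/- arXiv:2206.10409 — 13 statements merged into one kernel-verified Lean document; each statement's English description precedes it below -/
import Mathlib

section
/- For every μ ∈ ℝ³, the maps R_1, R_2, R_3 on ℝ³ realize the defining relations of the affine Weyl group of B_2^(1): each R_i is an involution (R_i ∘ R_i = id); R_1 ∘ R_2 = R_2 ∘ R_1, so that R_1 ∘ R_2 has order 2; (R_1 ∘ R_3)² = (R_3 ∘ R_1)², (R_1 ∘ R_3)⁴ = id and (R_1 ∘ R_3)² ≠ id, so that R_1 ∘ R_3 has order 4; and likewise (R_2 ∘ R_3)² = (R_3 ∘ R_2)², (R_2 ∘ R_3)⁴ = id and (R_2 ∘ R_3)² ≠ id. -/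
/-- The (normalized) Cartan matrix of the affine Lie algebra `B₂⁽¹⁾`. -/
noncomputable def cartanB2 : Matrix (Fin 3) (Fin 3) ℝ :=
  !![1, 0, -1; 0, 1, -1; -1/2, -1/2, 1]

/-- The generator `R_i` (for the parameter `μ`) acting on `ℝ³`. -/
noncomputable def R (μ : Fin 3 → ℝ) (i : Fin 3) (σ : Fin 3 → ℝ) : Fin 3 → ℝ :=
  Function.update σ i (σ i + 4 * μ i - 2 * ∑ j, cartanB2 i j * σ j)

theorem R_zero_apply (μ : Fin 3 → ℝ) (a b c : ℝ) :
    R μ 0 ![a, b, c] = ![-a + 2 * c + 4 * μ 0, b, c] := by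
  ext k
  fin_cases k <;> simp [R, cartanB2, Fin.sum_univ_three]
  ring

theorem R_one_apply (μ : Fin 3 → ℝ) (a b c : ℝ) :
    R μ 1 ![a, b, c] = ![a, -b + 2 * c + 4 * μ 1, c] := by
  ext k
  fin_cases k <;> simp [R, cartanB2, Fin.sum_univ_three]
  ring

theorem R_two_apply (μ : Fin 3 → ℝ) (a b c : ℝ) :
    R μ 2 ![a, b, c] = ![a, b, -c + a + b + 4 * μ 2] := by
  ext k
  fin_cases k <;> simp [R, cartanB2, Fin.sum_univ_three]
  ring

/-- Two self-maps of `ℝ³` agree as soon as they agree on vectors given by coordinates. -/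
theorem funext_vec_three {f g : (Fin 3 → ℝ) → (Fin 3 → ℝ)}
    (h : ∀ a b c : ℝ, f ![a, b, c] = g ![a, b, c]) : f = g := by
  funext σ
  have hσ : σ = ![σ 0, σ 1, σ 2] := by
    ext k
    fin_cases k <;> rfl
  rw [hσ]
  exact h _ _ _

/-- A self-map of `ℝ³` under which the `i`-th coordinates of two vectors change by different
amounts is not the identity. -/
theorem ne_id_of_sub_ne {f : (Fin 3 → ℝ) → (Fin 3 → ℝ)} (i : Fin 3) (x y : Fin 3 → ℝ)
    (h : f x i - f y i ≠ x i - y i) : f ≠ id := by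
  rintro rfl
  exact h rfl

/-- The maps `R₁, R₂, R₃` realize the defining relations of the affine Weyl group of
`B₂⁽¹⁾`: each `R_i` is an involution; `R₁ ∘ R₂ = R₂ ∘ R₁` and `R₁ ∘ R₂` has order 2;
`(R₁ ∘ R₃)² = (R₃ ∘ R₁)²` and `R₁ ∘ R₃` has order 4; likewise for `R₂, R₃`. -/
theorem affine_weyl_relations (μ : Fin 3 → ℝ) :
    (∀ i : Fin 3, R μ i ∘ R μ i = id) ∧
    (R μ 0 ∘ R μ 1 = R μ 1 ∘ R μ 0) ∧
    ((R μ 0 ∘ R μ 1) ∘ (R μ 0 ∘ R μ 1) = id ∧ R μ 0 ∘ R μ 1 ≠ id) ∧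
    ((R μ 0 ∘ R μ 2) ∘ (R μ 0 ∘ R μ 2) = (R μ 2 ∘ R μ 0) ∘ (R μ 2 ∘ R μ 0) ∧
      ((R μ 0 ∘ R μ 2) ∘ (R μ 0 ∘ R μ 2)) ∘ ((R μ 0 ∘ R μ 2) ∘ (R μ 0 ∘ R μ 2)) = id ∧
      (R μ 0 ∘ R μ 2) ∘ (R μ 0 ∘ R μ 2) ≠ id) ∧
    ((R μ 1 ∘ R μ 2) ∘ (R μ 1 ∘ R μ 2) = (R μ 2 ∘ R μ 1) ∘ (R μ 2 ∘ R μ 1) ∧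
      ((R μ 1 ∘ R μ 2) ∘ (R μ 1 ∘ R μ 2)) ∘ ((R μ 1 ∘ R μ 2) ∘ (R μ 1 ∘ R μ 2)) = id ∧
      (R μ 1 ∘ R μ 2) ∘ (R μ 1 ∘ R μ 2) ≠ id) := by
  refine ⟨fun i => funext_vec_three fun a b c => ?_, funext_vec_three fun a b c => ?_,
    ⟨funext_vec_three fun a b c => ?_, ne_id_of_sub_ne 0 ![1, 0, 0] ![0, 0, 0] ?_⟩,
    ⟨funext_vec_three fun a b c => ?_, funext_vec_three fun a b c => ?_,
      ne_id_of_sub_ne 0 ![1, 0, 0] ![0, 0, 0] ?_⟩,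
    ⟨funext_vec_three fun a b c => ?_, funext_vec_three fun a b c => ?_,
      ne_id_of_sub_ne 1 ![0, 1, 0] ![0, 0, 0] ?_⟩⟩
  case refine_1 =>
    fin_cases i <;>
      simp only [Function.comp_apply, Fin.zero_eta, Fin.mk_one, Fin.reduceFinMk,
        R_zero_apply, R_one_apply, R_two_apply, id] <;>
      ring_nf
  all_goals
    simp only [Function.comp_apply, R_zero_apply, R_one_apply, R_two_apply, id]
  case refine_4 | refine_7 | refine_10 =>
    simp only [Matrix.cons_val_zero, Matrix.cons_val_one]
    ring_nf
    norm_num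
  all_goals ring_nf
end

section
/- For every μ ∈ ℝ³, every element σ ∈ Γ(μ) satisfies the Pohozaev identity for μ, i.e. (σ1 − σ3)² + (σ2 − σ3)² = 4(μ1 σ1 + μ2 σ2 + 2 μ3 σ3). -/
/-- Membership in `Γ(μ)`, the smallest subset of `ℝ³` containing `0` and closed under
the generators `R₁, R₂, R₃`. -/
inductive GammaMem (μ : Fin 3 → ℝ) : (Fin 3 → ℝ) → Prop
  | zero : GammaMem μ 0
  | step (i : Fin 3) {σ : Fin 3 → ℝ} : GammaMem μ σ → GammaMem μ (R μ i σ)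

/-- The Pohozaev identity for `μ`. -/
def Poho (μ σ : Fin 3 → ℝ) : Prop :=
  (σ 0 - σ 2) ^ 2 + (σ 1 - σ 2) ^ 2 = 4 * (μ 0 * σ 0 + μ 1 * σ 1 + 2 * μ 2 * σ 2)

/-- Every element of `Γ(μ)` satisfies the Pohozaev identity for `μ`. -/
theorem gamma_satisfies_pohozaev (μ σ : Fin 3 → ℝ) (h : GammaMem μ σ) : Poho μ σ := by
  induction h with
  | zero => simp [Poho]
  | step i _ ih =>
    unfold Poho at ih ⊢
    fin_cases i <;> simp [R, cartanB2, Fin.sum_univ_three] <;> linear_combination ih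
end

section
/- For every μ ∈ ℝ³, every σ ∈ ℝ³ and every i ∈ {1,2,3}: if σ satisfies the Pohozaev identity for μ, then R_i σ also satisfies the Pohozaev identity for μ. -/
/-- Each generator `R_i` preserves the Pohozaev identity. -/
theorem generators_preserve_pohozaev (μ σ : Fin 3 → ℝ) (i : Fin 3) (h : Poho μ σ) :
    Poho μ (R μ i σ) := by
  unfold Poho at h ⊢
  fin_cases i <;>
    simp [R, cartanB2, Fin.sum_univ_three] <;>
    linear_combination h
end

section
/- Every entry of every matrix F ∈ 𝔉 is a nonnegative integer multiple of 4. Consequently, for every μ ∈ ℝ³ and every σ ∈ Γ(μ), there exists a 3×3 matrix (n_ij) of nonnegative integers such that σ_i = 4·Σ_{j=1}^{3} n_ij μ_j for i = 1, 2, 3. -/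
/-- The lift of the generator `R_i` to 3×3 real matrices: the `i`-th row `F_i` is
replaced by `F_i + 4 e_i - 2 ∑_j a_{ij} F_j` and the other rows are unchanged. -/
noncomputable def RM (i : Fin 3) (F : Matrix (Fin 3) (Fin 3) ℝ) : Matrix (Fin 3) (Fin 3) ℝ :=
  Matrix.updateRow F i
    (fun k => F i k + 4 * (if k = i then 1 else 0) - 2 * ∑ j, cartanB2 i j * F j k)

/-- Membership in `𝔉`, the smallest set of 3×3 real matrices containing the zero
matrix and closed under the lifted generators `R₁, R₂, R₃`. -/
inductive FMem : Matrix (Fin 3) (Fin 3) ℝ → Prop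
  | zero : FMem 0
  | step (i : Fin 3) {F : Matrix (Fin 3) (Fin 3) ℝ} : FMem F → FMem (RM i F)

/-- The Pohozaev identity for an integer vector `(a, b, c)` and the `k`-th unit vector as
parameter, after dividing the vector by `4`. -/
def IntPohozaev (k : Fin 3) (a b c : ℤ) : Prop :=
  (a - c) ^ 2 + (b - c) ^ 2 =
    (if k = 0 then 1 else 0) * a + (if k = 1 then 1 else 0) * b + 2 * (if k = 2 then 1 else 0) * c

/-- Integer solutions of the Pohozaev identity for a unit vector are nonnegative. -/
lemma IntPohozaev.nonneg {k : Fin 3} {a b c : ℤ} (h : IntPohozaev k a b c) :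
    0 ≤ a ∧ 0 ≤ b ∧ 0 ≤ c := by
  obtain ⟨p, rfl⟩ : ∃ p, a = c + p := ⟨a - c, by ring⟩
  obtain ⟨q, rfl⟩ : ∃ q, b = c + q := ⟨b - c, by ring⟩
  have le_sq (n : ℤ) : n ≤ n ^ 2 ∧ -n ≤ n ^ 2 :=
    ⟨Int.le_self_sq n, by simpa using Int.le_self_sq (-n)⟩
  have hp := le_sq p
  have hq := le_sq q
  unfold IntPohozaev at h
  fin_cases k <;> simp at h
  · exact ⟨by nlinarith, by linarith, by linarith⟩
  · exact ⟨by linarith, by nlinarith, by linarith⟩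
  · have parity : p % 2 = q % 2 := by
      have hp2 : p ^ 2 % 2 = p % 2 := by
        rcases Int.emod_two_eq_zero_or_one p with h' | h' <;> simp [pow_two, Int.mul_emod, h']
      have hq2 : q ^ 2 % 2 = q % 2 := by
        rcases Int.emod_two_eq_zero_or_one q with h' | h' <;> simp [pow_two, Int.mul_emod, h']
      omega
    have key (x y : ℤ) (hxy : x % 2 = y % 2) : 0 ≤ x ^ 2 + y ^ 2 + 2 * x := by
      by_cases hx : x = -1
      · subst hx
        have : y ≠ 0 := by rintro rfl; simp at hxy
        have : 0 < y ^ 2 := by positivity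
        linarith
      · rcases (by omega : x ≤ -2 ∨ 0 ≤ x) with h' | h' <;> nlinarith [sq_nonneg y]
    have h₁ := key p q parity
    have h₂ := key q p parity.symm
    exact ⟨by linarith, by linarith, by nlinarith⟩

/-- Each column of a matrix in `𝔉` is `4` times an integer solution of the Pohozaev identity. -/
lemma FMem.exists_intPohozaev {F : Matrix (Fin 3) (Fin 3) ℝ} (hF : FMem F) (k : Fin 3) :
    ∃ a b c : ℤ, F 0 k = 4 * a ∧ F 1 k = 4 * b ∧ F 2 k = 4 * c ∧ IntPohozaev k a b c := by
  induction hF with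
  | zero => exact ⟨0, 0, 0, by simp [IntPohozaev]⟩
  | @step i F _ ih =>
    obtain ⟨a, b, c, ha, hb, hc, h⟩ := ih
    unfold IntPohozaev at h
    fin_cases i
    · refine ⟨-a + (if k = 0 then 1 else 0) + 2 * c, b, c, ?_, ?_, ?_, ?_⟩
      · simp [RM, cartanB2, Fin.sum_univ_three, ha, hc]
        split_ifs <;> ring
      · simp [RM, hb]
      · simp [RM, hc]
      · unfold IntPohozaev
        linear_combination h
    · refine ⟨a, -b + (if k = 1 then 1 else 0) + 2 * c, c, ?_, ?_, ?_, ?_⟩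
      · simp [RM, ha]
      · simp [RM, cartanB2, Fin.sum_univ_three, hb, hc]
        split_ifs <;> ring
      · simp [RM, hc]
      · unfold IntPohozaev
        linear_combination h
    · refine ⟨a, b, -c + (if k = 2 then 1 else 0) + a + b, ?_, ?_, ?_, ?_⟩
      · simp [RM, ha]
      · simp [RM, hb]
      · simp [RM, cartanB2, Fin.sum_univ_three, ha, hb, hc]
        split_ifs <;> ring
      · unfold IntPohozaev
        linear_combination h

/-- The entries of matrices in `𝔉` are nonnegative integer multiples of `4`. -/
lemma FMem.exists_nat {F : Matrix (Fin 3) (Fin 3) ℝ} (hF : FMem F) (i j : Fin 3) :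
    ∃ n : ℕ, F i j = 4 * (n : ℝ) := by
  obtain ⟨a, b, c, ha, hb, hc, h⟩ := hF.exists_intPohozaev j
  obtain ⟨ha₀, hb₀, hc₀⟩ := h.nonneg
  lift a to ℕ using ha₀
  lift b to ℕ using hb₀
  lift c to ℕ using hc₀
  fin_cases i
  · exact ⟨a, by simpa using ha⟩
  · exact ⟨b, by simpa using hb⟩
  · exact ⟨c, by simpa using hc⟩

/-- The lifted generators are compatible with evaluation at `μ`. -/
lemma R_mulVec (μ : Fin 3 → ℝ) (i : Fin 3) (F : Matrix (Fin 3) (Fin 3) ℝ) :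
    R μ i (F.mulVec μ) = (RM i F).mulVec μ := by
  ext l
  by_cases hl : l = i
  · subst hl
    fin_cases l <;>
      simp [R, RM, Matrix.mulVec, dotProduct, Fin.sum_univ_three] <;> ring
  · simp [R, RM, Matrix.mulVec, dotProduct, hl]

/-- Every element of `Γ(μ)` is the value at `μ` of a matrix in `𝔉`. -/
lemma GammaMem.exists_fMem {μ σ : Fin 3 → ℝ} (hσ : GammaMem μ σ) :
    ∃ F, FMem F ∧ σ = F.mulVec μ := by
  induction hσ with
  | zero => exact ⟨0, .zero, by simp⟩
  | step i _ ih =>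
    obtain ⟨F, hF, rfl⟩ := ih
    exact ⟨RM i F, .step i hF, R_mulVec μ i F⟩

/-- Every entry of every matrix in `𝔉` is a nonnegative integer multiple of `4`;
consequently every `σ ∈ Γ(μ)` has the form `σ_i = 4 ∑_j n_{ij} μ_j` with `n_{ij}`
nonnegative integers. -/
theorem fmat_entries_nonneg_multiples_of_four :
    (∀ F : Matrix (Fin 3) (Fin 3) ℝ, FMem F → ∀ i j, ∃ n : ℕ, F i j = 4 * (n : ℝ)) ∧
    (∀ (μ : Fin 3 → ℝ) (σ : Fin 3 → ℝ), GammaMem μ σ →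
      ∃ n : Fin 3 → Fin 3 → ℕ, ∀ i, σ i = 4 * ∑ j, (n i j : ℝ) * μ j) := by
  refine ⟨fun F hF => hF.exists_nat, fun μ σ hσ => ?_⟩
  obtain ⟨F, hF, rfl⟩ := hσ.exists_fMem
  choose n hn using hF.exists_nat
  refine ⟨n, fun i => ?_⟩
  simp only [Matrix.mulVec, dotProduct, hn, Finset.mul_sum, mul_assoc]
end

section
/- Let μ1, μ2, μ3 > 0 and let σ = (σ1, σ2, σ3) ∈ ℝ³ with σ1, σ2, σ3 ≥ 0 satisfy the Pohozaev identity for μ. If in addition 4μ_i − 2·Σ_{j=1}^{3} a_ij σ_j ≥ 0 for i = 1, 2, 3 (equivalently, (R_i σ)_i ≥ σ_i for each i, i.e. σ is minimal for the componentwise partial order), then σ = (0,0,0). -/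
/-- A componentwise-minimal nonnegative solution of the Pohozaev identity (i.e. one with
`4μ_i - 2 ∑_j a_{ij} σ_j ≥ 0` for all `i`) must be the zero vector. -/
theorem minimal_element_is_zero (μ σ : Fin 3 → ℝ)
    (hμ : ∀ i, 0 < μ i) (hσ : ∀ i, 0 ≤ σ i) (hP : Poho μ σ)
    (hmin : ∀ i, 0 ≤ 4 * μ i - 2 * ∑ j, cartanB2 i j * σ j) :
    σ = 0 := by
  have h0 := hmin 0
  have h1 := hmin 1
  have h2 := hmin 2
  simp only [cartanB2, Fin.sum_univ_three, Matrix.of_apply, Matrix.cons_val] at h0 h1 h2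
  unfold Poho at hP
  have p0 := mul_nonneg (hμ 0).le (hσ 0)
  have p1 := mul_nonneg (hμ 1).le (hσ 1)
  have p2 := mul_nonneg (hμ 2).le (hσ 2)
  -- The Pohozaev form is `∑ dᵢ σᵢ (Aσ)ᵢ` with `d = (1, 1, 2)`, and `(Aσ)ᵢ ≤ 2 μᵢ`.
  have hsum : μ 0 * σ 0 + μ 1 * σ 1 + 2 * (μ 2 * σ 2) ≤ 0 := by
    linarith [mul_nonneg (hσ 0) h0, mul_nonneg (hσ 1) h1, mul_nonneg (hσ 2) h2]
  have hzero : ∀ i, μ i * σ i = 0 := by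
    intro i
    fin_cases i <;> simp only [Fin.zero_eta, Fin.mk_one, Fin.reduceFinMk] <;> linarith
  funext i
  exact (mul_eq_zero.mp (hzero i)).resolve_left (hμ i).ne'
end

section
/- Let σ ∈ Γ((1,1,1)). Then σ = (4n1, 4n2, 4n3) for some nonnegative integers n1, n2, n3, and the pair of residues ((n1 − n3) mod 4, (n2 − n3) mod 4) belongs to 𝒯. Conversely, every pair in 𝒯 occurs: the vectors (0,0,0), (4,0,0), (0,4,0), (4,4,0), (4,4,12), (4,0,8), (0,4,8), (0,0,4) all lie in Γ((1,1,1)) and realize the types (0,0), (1,0), (0,1), (1,1), (2,2), (3,2), (2,3), (3,3), respectively. -/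
/-- The set `𝒯` of the eight admissible types in `(ℤ/4ℤ)²`. -/
def Ttypes : Set (ZMod 4 × ZMod 4) :=
  {(0, 0), (0, 1), (1, 0), (1, 1), (2, 2), (2, 3), (3, 2), (3, 3)}

/-- `v ∈ Γ(1,1,1)` and `v = (4n₁, 4n₂, 4n₃)` with type `((n₁-n₃) mod 4, (n₂-n₃) mod 4) = t`. -/
def realizesType (v : Fin 3 → ℝ) (t : ZMod 4 × ZMod 4) : Prop :=
  GammaMem ![1, 1, 1] v ∧ ∃ n : Fin 3 → ℕ, (∀ i, v i = 4 * (n i : ℝ)) ∧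
    ((n 0 : ZMod 4) - (n 2 : ZMod 4), (n 1 : ZMod 4) - (n 2 : ZMod 4)) = t

/-- On `σ = 4n`, the generators for `μ = (1,1,1)` act by integral affine maps. -/
theorem R_one_zero (x y z : ℝ) :
    R ![1, 1, 1] 0 ![4 * x, 4 * y, 4 * z] = ![4 * (2 * z - x + 1), 4 * y, 4 * z] := by
  ext j
  fin_cases j <;> simp [R, cartanB2, Fin.sum_univ_three, Function.update]
  ring

theorem R_one_one (x y z : ℝ) :
    R ![1, 1, 1] 1 ![4 * x, 4 * y, 4 * z] = ![4 * x, 4 * (2 * z - y + 1), 4 * z] := by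
  ext j
  fin_cases j <;> simp [R, cartanB2, Fin.sum_univ_three, Function.update]
  ring

theorem R_one_two (x y z : ℝ) :
    R ![1, 1, 1] 2 ![4 * x, 4 * y, 4 * z] = ![4 * x, 4 * y, 4 * (x + y - z + 1)] := by
  ext j
  fin_cases j <;> simp [R, cartanB2, Fin.sum_univ_three, Function.update]
  ring

/-- Elements of `Γ(1,1,1)` lie in `4ℤ³` and satisfy the Pohozaev identity. -/
theorem GammaMem.exists_int_pohozaev {σ : Fin 3 → ℝ} (h : GammaMem ![1, 1, 1] σ) :
    ∃ x y z : ℤ, σ = ![4 * (x : ℝ), 4 * (y : ℝ), 4 * (z : ℝ)] ∧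
      (x - z) ^ 2 + (y - z) ^ 2 = x + y + 2 * z := by
  induction h with
  | zero => exact ⟨0, 0, 0, by ext j; fin_cases j <;> simp, by norm_num⟩
  | step i _ ih =>
    obtain ⟨x, y, z, rfl, h⟩ := ih
    fin_cases i
    · exact ⟨2 * z - x + 1, y, z, by push_cast; exact R_one_zero .., by linear_combination h⟩
    · exact ⟨x, 2 * z - y + 1, z, by push_cast; exact R_one_one .., by linear_combination h⟩
    · exact ⟨x, y, x + y - z + 1, by push_cast; exact R_one_two .., by linear_combination h⟩

theorem Int.mul_sub_one_nonneg (a : ℤ) : 0 ≤ a * (a - 1) := by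
  rcases le_or_gt a 0 with h | h <;> nlinarith

/-- Integral solutions of the Pohozaev identity have nonnegative coordinates. -/
theorem nonneg_of_pohozaev {x y z : ℤ} (h : (x - z) ^ 2 + (y - z) ^ 2 = x + y + 2 * z) :
    0 ≤ x ∧ 0 ≤ y ∧ 0 ≤ z := by
  have hx := Int.mul_sub_one_nonneg (x - z)
  have hy := Int.mul_sub_one_nonneg (y - z)
  have hx' := Int.mul_sub_one_nonneg (x - z + 2)
  have hy' := Int.mul_sub_one_nonneg (y - z + 2)
  have hx4 : -2 ≤ 4 * x := by linarith
  have hy4 : -2 ≤ 4 * y := by linarith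
  have hz4 : 0 ≤ 4 * z := by linarith
  omega

theorem mem_Ttypes_of_mul_sub_one (a b : ZMod 4) (h : a * (a - 1) + b * (b - 1) = 0) :
    (a, b) ∈ Ttypes := by
  simp only [Ttypes, Set.mem_insert_iff, Set.mem_singleton_iff]
  revert a b
  decide

theorem mem_Ttypes_of_pohozaev {x y z : ℤ} (h : (x - z) ^ 2 + (y - z) ^ 2 = x + y + 2 * z) :
    ((x : ZMod 4) - z, (y : ZMod 4) - z) ∈ Ttypes := by
  apply mem_Ttypes_of_mul_sub_one
  have h' := congrArg (Int.cast : ℤ → ZMod 4) h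
  push_cast at h'
  have h4 : (4 : ZMod 4) = 0 := rfl
  linear_combination h' + (z : ZMod 4) * h4

theorem realizesType_of_nat {v : Fin 3 → ℝ} {t : ZMod 4 × ZMod 4} (x y z : ℕ)
    (hv : v = ![4 * (x : ℝ), 4 * (y : ℝ), 4 * (z : ℝ)]) (h : GammaMem ![1, 1, 1] v)
    (ht : ((x : ZMod 4) - z, (y : ZMod 4) - z) = t) : realizesType v t :=
  ⟨h, ![x, y, z], fun i => by subst hv; fin_cases i <;> rfl, ht⟩


/-- Every `σ ∈ Γ(1,1,1)` is of the form `(4n₁, 4n₂, 4n₃)` with type in `𝒯`, and all eight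
types of `𝒯` are realized by the listed explicit elements of `Γ(1,1,1)`. -/
theorem gamma111_eight_types :
    (∀ σ : Fin 3 → ℝ, GammaMem ![1, 1, 1] σ →
      ∃ n : Fin 3 → ℕ, (∀ i, σ i = 4 * (n i : ℝ)) ∧
        ((n 0 : ZMod 4) - (n 2 : ZMod 4), (n 1 : ZMod 4) - (n 2 : ZMod 4)) ∈ Ttypes) ∧
    realizesType ![0, 0, 0] (0, 0) ∧
    realizesType ![4, 0, 0] (1, 0) ∧
    realizesType ![0, 4, 0] (0, 1) ∧
    realizesType ![4, 4, 0] (1, 1) ∧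
    realizesType ![4, 4, 12] (2, 2) ∧
    realizesType ![4, 0, 8] (3, 2) ∧
    realizesType ![0, 4, 8] (2, 3) ∧
    realizesType ![0, 0, 4] (3, 3) := by
  have m000 : GammaMem ![1, 1, 1] ![0, 0, 0] := by
    convert GammaMem.zero (μ := ![1, 1, 1]) using 1
    ext j; fin_cases j <;> rfl
  have m100 : GammaMem ![1, 1, 1] ![4, 0, 0] := by
    have := R_one_zero 0 0 0
    norm_num at this
    exact this ▸ m000.step 0
  have m010 : GammaMem ![1, 1, 1] ![0, 4, 0] := by
    have := R_one_one 0 0 0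
    norm_num at this
    exact this ▸ m000.step 1
  have m110 : GammaMem ![1, 1, 1] ![4, 4, 0] := by
    have := R_one_one 1 0 0
    norm_num at this
    exact this ▸ m100.step 1
  have m113 : GammaMem ![1, 1, 1] ![4, 4, 12] := by
    have := R_one_two 1 1 0
    norm_num at this
    exact this ▸ m110.step 2
  have m102 : GammaMem ![1, 1, 1] ![4, 0, 8] := by
    have := R_one_two 1 0 0
    norm_num at this
    exact this ▸ m100.step 2
  have m012 : GammaMem ![1, 1, 1] ![0, 4, 8] := by
    have := R_one_two 0 1 0
    norm_num at this
    exact this ▸ m010.step 2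
  have m001 : GammaMem ![1, 1, 1] ![0, 0, 4] := by
    have := R_one_two 0 0 0
    norm_num at this
    exact this ▸ m000.step 2
  refine ⟨fun σ hσ => ?_,
    realizesType_of_nat 0 0 0 (by norm_num) m000 (by decide),
    realizesType_of_nat 1 0 0 (by norm_num) m100 (by decide),
    realizesType_of_nat 0 1 0 (by norm_num) m010 (by decide),
    realizesType_of_nat 1 1 0 (by norm_num) m110 (by decide),
    realizesType_of_nat 1 1 3 (by norm_num) m113 (by decide),
    realizesType_of_nat 1 0 2 (by norm_num) m102 (by decide),
    realizesType_of_nat 0 1 2 (by norm_num) m012 (by decide),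
    realizesType_of_nat 0 0 1 (by norm_num) m001 (by decide)⟩
  obtain ⟨x, y, z, rfl, h⟩ := hσ.exists_int_pohozaev
  obtain ⟨hx, hy, hz⟩ := nonneg_of_pohozaev h
  lift x to ℕ using hx
  lift y to ℕ using hy
  lift z to ℕ using hz
  exact ⟨![x, y, z], fun i => by fin_cases i <;> simp, by simpa using mem_Ttypes_of_pohozaev h⟩
end

section
/- Let σ ∈ Γ((1,1,1)), so that σ = (4n1, 4n2, 4n3) with nonnegative integers n_i; call the pair ((n1 − n3) mod 4, (n2 − n3) mod 4) the type of σ. If σ has type (m1', m2'), then R_1 σ has type ((1 − m1') mod 4, m2'), R_2 σ has type (m1', (1 − m2') mod 4), and R_3 σ has type ((−m2' − 1) mod 4, (−m1' − 1) mod 4). -/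
/-- The type `((n₁ - n₃) mod 4, (n₂ - n₃) mod 4)` associated with `(n₁, n₂, n₃)`. -/
def tp (n : Fin 3 → ℕ) : ZMod 4 × ZMod 4 :=
  ((n 0 : ZMod 4) - (n 2 : ZMod 4), (n 1 : ZMod 4) - (n 2 : ZMod 4))

/-- The action of `R₁` on `(4n₁, 4n₂, 4n₃)` in integer coordinates. -/
lemma R_zero_coords {σ : Fin 3 → ℝ} {n n' : Fin 3 → ℕ} (hn : ∀ i, σ i = 4 * (n i : ℝ))
    (h : ∀ j, R ![1, 1, 1] 0 σ j = 4 * (n' j : ℝ)) :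
    (n' 0 : ℤ) = 2 * n 2 - n 0 + 1 ∧ n' 1 = n 1 ∧ n' 2 = n 2 := by
  have h0 := h 0
  have h1 := h 1
  have h2 := h 2
  simp [R, cartanB2, Fin.sum_univ_three, hn] at h0 h1 h2
  refine ⟨?_, h1.symm, h2.symm⟩
  have : (n' 0 : ℝ) = 2 * n 2 - n 0 + 1 := by linarith
  exact_mod_cast this

/-- The action of `R₂` on `(4n₁, 4n₂, 4n₃)` in integer coordinates. -/
lemma R_one_coords {σ : Fin 3 → ℝ} {n n' : Fin 3 → ℕ} (hn : ∀ i, σ i = 4 * (n i : ℝ))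
    (h : ∀ j, R ![1, 1, 1] 1 σ j = 4 * (n' j : ℝ)) :
    n' 0 = n 0 ∧ (n' 1 : ℤ) = 2 * n 2 - n 1 + 1 ∧ n' 2 = n 2 := by
  have h0 := h 0
  have h1 := h 1
  have h2 := h 2
  simp [R, cartanB2, Fin.sum_univ_three, hn] at h0 h1 h2
  refine ⟨h0.symm, ?_, h2.symm⟩
  have : (n' 1 : ℝ) = 2 * n 2 - n 1 + 1 := by linarith
  exact_mod_cast this

/-- The action of `R₃` on `(4n₁, 4n₂, 4n₃)` in integer coordinates. -/
lemma R_two_coords {σ : Fin 3 → ℝ} {n n' : Fin 3 → ℕ} (hn : ∀ i, σ i = 4 * (n i : ℝ))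
    (h : ∀ j, R ![1, 1, 1] 2 σ j = 4 * (n' j : ℝ)) :
    n' 0 = n 0 ∧ n' 1 = n 1 ∧ (n' 2 : ℤ) = n 0 + n 1 - n 2 + 1 := by
  have h0 := h 0
  have h1 := h 1
  have h2 := h 2
  simp [R, cartanB2, Fin.sum_univ_three, hn] at h0 h1 h2
  refine ⟨h0.symm, h1.symm, ?_⟩
  have : (n' 2 : ℝ) = n 0 + n 1 - n 2 + 1 := by linarith
  exact_mod_cast this

/-- How the type of `σ ∈ Γ(1,1,1)` transforms under the generators `R₁, R₂, R₃`:
if `σ = (4n₁, 4n₂, 4n₃)` has type `(m₁', m₂')`, then `R₁σ` has type `(1 - m₁', m₂')`,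
`R₂σ` has type `(m₁', 1 - m₂')` and `R₃σ` has type `(-m₂' - 1, -m₁' - 1)` (mod 4). -/
theorem type_transformation (σ : Fin 3 → ℝ) (hσ : GammaMem ![1, 1, 1] σ)
    (n : Fin 3 → ℕ) (hn : ∀ i, σ i = 4 * (n i : ℝ)) :
    (∀ n' : Fin 3 → ℕ, (∀ j, R ![1, 1, 1] 0 σ j = 4 * (n' j : ℝ)) →
      tp n' = (1 - (tp n).1, (tp n).2)) ∧
    (∀ n' : Fin 3 → ℕ, (∀ j, R ![1, 1, 1] 1 σ j = 4 * (n' j : ℝ)) →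
      tp n' = ((tp n).1, 1 - (tp n).2)) ∧
    (∀ n' : Fin 3 → ℕ, (∀ j, R ![1, 1, 1] 2 σ j = 4 * (n' j : ℝ)) →
      tp n' = (-(tp n).2 - 1, -(tp n).1 - 1)) := by
  refine ⟨fun n' h => ?_, fun n' h => ?_, fun n' h => ?_⟩
  · obtain ⟨h0, h1, h2⟩ := R_zero_coords hn h
    have h0' := congrArg (Int.cast : ℤ → ZMod 4) h0
    push_cast at h0'
    simp only [tp, h0', h1, h2, Prod.mk.injEq]
    simp only [and_true]; ring
  · obtain ⟨h0, h1, h2⟩ := R_one_coords hn h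
    have h1' := congrArg (Int.cast : ℤ → ZMod 4) h1
    push_cast at h1'
    simp only [tp, h0, h1', h2, Prod.mk.injEq]
    simp only [true_and]; ring
  · obtain ⟨h0, h1, h2⟩ := R_two_coords hn h
    have h2' := congrArg (Int.cast : ℤ → ZMod 4) h2
    push_cast at h2'
    simp only [tp, h0, h1, h2', Prod.mk.injEq]
    constructor <;> ring
end

section
/- Γ((1,1,1)) = { (m1(m1+3) + m2(m2−1), m1(m1−1) + m2(m2+3), m1(m1−1) + m2(m2−1)) : (m1, m2) ∈ ℤ² such that either (m1 mod 4 ∈ {0,1} and m2 mod 4 ∈ {0,1}) or (m1 mod 4 ∈ {2,3} and m2 mod 4 ∈ {2,3}) }. -/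
/-- The residue condition modulo `4` on the parameters `(m₁, m₂)`. -/
def Admissible (m1 m2 : ℤ) : Prop :=
  ((m1 % 4 = 0 ∨ m1 % 4 = 1) ∧ (m2 % 4 = 0 ∨ m2 % 4 = 1)) ∨
    ((m1 % 4 = 2 ∨ m1 % 4 = 3) ∧ (m2 % 4 = 2 ∨ m2 % 4 = 3))

/-- The point of `ℝ³` with parameters `(m₁, m₂)`. -/
def gammaPoint (m1 m2 : ℤ) : Fin 3 → ℝ :=
  ![((m1 * (m1 + 3) + m2 * (m2 - 1) : ℤ) : ℝ),
    ((m1 * (m1 - 1) + m2 * (m2 + 3) : ℤ) : ℝ),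
    ((m1 * (m1 - 1) + m2 * (m2 - 1) : ℤ) : ℝ)]

lemma R_zero_gammaPoint (m1 m2 : ℤ) :
    R ![1, 1, 1] 0 (gammaPoint m1 m2) = gammaPoint (1 - m1) m2 := by
  ext j
  fin_cases j <;> simp [R, gammaPoint, cartanB2, Fin.sum_univ_three] <;> ring

lemma R_one_gammaPoint (m1 m2 : ℤ) :
    R ![1, 1, 1] 1 (gammaPoint m1 m2) = gammaPoint m1 (1 - m2) := by
  ext j
  fin_cases j <;> simp [R, gammaPoint, cartanB2, Fin.sum_univ_three] <;> ring

lemma R_two_gammaPoint (m1 m2 : ℤ) :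
    R ![1, 1, 1] 2 (gammaPoint m1 m2) = gammaPoint (-1 - m2) (-1 - m1) := by
  ext j
  fin_cases j <;> simp [R, gammaPoint, cartanB2, Fin.sum_univ_three] <;> ring

lemma gammaPoint_zero : gammaPoint 0 0 = 0 := by
  ext j
  fin_cases j <;> simp [gammaPoint]

lemma Admissible.one_sub_left {m1 m2 : ℤ} (h : Admissible m1 m2) : Admissible (1 - m1) m2 := by
  unfold Admissible at *; omega

lemma Admissible.one_sub_right {m1 m2 : ℤ} (h : Admissible m1 m2) : Admissible m1 (1 - m2) := by
  unfold Admissible at *; omega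

lemma Admissible.reflect {m1 m2 : ℤ} (h : Admissible m1 m2) :
    Admissible (-1 - m2) (-1 - m1) := by
  unfold Admissible at *; omega

lemma exists_gammaPoint_of_gammaMem {σ : Fin 3 → ℝ} (h : GammaMem ![1, 1, 1] σ) :
    ∃ m1 m2 : ℤ, Admissible m1 m2 ∧ σ = gammaPoint m1 m2 := by
  induction h with
  | zero => exact ⟨0, 0, by simp [Admissible], gammaPoint_zero.symm⟩
  | step i _ ih =>
    obtain ⟨m1, m2, hm, rfl⟩ := ih
    fin_cases i
    · exact ⟨_, _, hm.one_sub_left, R_zero_gammaPoint m1 m2⟩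
    · exact ⟨_, _, hm.one_sub_right, R_one_gammaPoint m1 m2⟩
    · exact ⟨_, _, hm.reflect, R_two_gammaPoint m1 m2⟩

/-- Descent on the third coordinate: reflect `(m₁, m₂)` into the quadrant `m₁, m₂ ≤ 0`; there
`R₃` decreases the third coordinate unless `m₁ = m₂ = 0`. -/
lemma gammaMem_gammaPoint {m1 m2 : ℤ} (hm : Admissible m1 m2) :
    GammaMem ![1, 1, 1] (gammaPoint m1 m2) := by
  suffices H : ∀ (n : ℕ) (m1 m2 : ℤ), Admissible m1 m2 →
      m1 * (m1 - 1) + m2 * (m2 - 1) < n → GammaMem ![1, 1, 1] (gammaPoint m1 m2) from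
    H (m1 * (m1 - 1) + m2 * (m2 - 1) + 1).toNat m1 m2 hm (by omega)
  intro n
  induction n with
  | zero =>
    intro m1 m2 _ hlt
    have sub_one_nonneg (m : ℤ) : 0 ≤ m * (m - 1) := by
      rcases le_or_gt m 0 with h | h <;> nlinarith
    have := sub_one_nonneg m1
    have := sub_one_nonneg m2
    push_cast at hlt
    omega
  | succ n ih =>
    have nonpos (m1 m2 : ℤ) (hm : Admissible m1 m2)
        (hlt : m1 * (m1 - 1) + m2 * (m2 - 1) < (n + 1 : ℕ)) (h1 : m1 ≤ 0) (h2 : m2 ≤ 0) :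
        GammaMem ![1, 1, 1] (gammaPoint m1 m2) := by
      rcases lt_or_ge (m1 + m2) (-1) with hsum | hsum
      · have := (ih _ _ hm.reflect (by push_cast at hlt; nlinarith)).step 2
        rw [R_two_gammaPoint] at this
        simpa using this
      · obtain ⟨rfl, rfl⟩ : m1 = 0 ∧ m2 = 0 := by
          unfold Admissible at hm; omega
        exact gammaPoint_zero ▸ GammaMem.zero
    have right_nonpos (m1 m2 : ℤ) (hm : Admissible m1 m2)
        (hlt : m1 * (m1 - 1) + m2 * (m2 - 1) < (n + 1 : ℕ)) (h2 : m2 ≤ 0) :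
        GammaMem ![1, 1, 1] (gammaPoint m1 m2) := by
      rcases le_or_gt m1 0 with h1 | h1
      · exact nonpos m1 m2 hm hlt h1 h2
      · have := (nonpos _ _ hm.one_sub_left (by linarith) (by omega) h2).step 0
        rw [R_zero_gammaPoint] at this
        simpa using this
    intro m1 m2 hm hlt
    rcases le_or_gt m2 0 with h2 | h2
    · exact right_nonpos m1 m2 hm hlt h2
    · have := (right_nonpos _ _ hm.one_sub_right (by linarith) (by omega)).step 1
      rw [R_one_gammaPoint] at this
      simpa using this

/-- Explicit description of `Γ((1,1,1))`:
`Γ((1,1,1)) = {(m₁(m₁+3)+m₂(m₂−1), m₁(m₁−1)+m₂(m₂+3), m₁(m₁−1)+m₂(m₂−1))}` where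
`(m₁, m₂) ∈ ℤ²` with either `m₁, m₂ ≡ 0, 1 (mod 4)` or `m₁, m₂ ≡ 2, 3 (mod 4)`. -/
theorem gamma111_explicit :
    {σ : Fin 3 → ℝ | GammaMem ![1, 1, 1] σ} =
    {σ : Fin 3 → ℝ | ∃ m1 m2 : ℤ,
      (((m1 % 4 = 0 ∨ m1 % 4 = 1) ∧ (m2 % 4 = 0 ∨ m2 % 4 = 1)) ∨
       ((m1 % 4 = 2 ∨ m1 % 4 = 3) ∧ (m2 % 4 = 2 ∨ m2 % 4 = 3))) ∧
      σ = ![((m1 * (m1 + 3) + m2 * (m2 - 1) : ℤ) : ℝ),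
            ((m1 * (m1 - 1) + m2 * (m2 + 3) : ℤ) : ℝ),
            ((m1 * (m1 - 1) + m2 * (m2 - 1) : ℤ) : ℝ)]} := by
  ext σ
  constructor
  · exact exists_gammaPoint_of_gammaMem
  · rintro ⟨m1, m2, hm, rfl⟩
    exact gammaMem_gammaPoint hm
end

section
/- Let N = (n_ij) be a real 3×3 matrix such that for every μ ∈ ℝ³ the vector σ(μ) defined by σ_i(μ) = 4·Σ_{j=1}^{3} n_ij μ_j satisfies the Pohozaev identity for μ. Then (n11 − n31)² + (n21 − n31)² = n11, (n12 − n32)² + (n22 − n32)² = n22, and (n13 − n33)² + (n23 − n33)² = 2·n33. If moreover all n_ij are integers, then n13 and n23 are even. -/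
/-- If `σ_i(μ) = 4 ∑_j n_{ij} μ_j` satisfies the Pohozaev identity for every `μ`, then
the coefficients satisfy `(n₁₁−n₃₁)² + (n₂₁−n₃₁)² = n₁₁`, `(n₁₂−n₃₂)² + (n₂₂−n₃₂)² = n₂₂`
and `(n₁₃−n₃₃)² + (n₂₃−n₃₃)² = 2n₃₃`; if moreover all `n_{ij}` are integers, then
`n₁₃` and `n₂₃` are even. -/
theorem pohozaev_coefficient_identities (N : Matrix (Fin 3) (Fin 3) ℝ)
    (h : ∀ μ : Fin 3 → ℝ, Poho μ (fun i => 4 * ∑ j, N i j * μ j)) :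
    ((N 0 0 - N 2 0) ^ 2 + (N 1 0 - N 2 0) ^ 2 = N 0 0 ∧
     (N 0 1 - N 2 1) ^ 2 + (N 1 1 - N 2 1) ^ 2 = N 1 1 ∧
     (N 0 2 - N 2 2) ^ 2 + (N 1 2 - N 2 2) ^ 2 = 2 * N 2 2) ∧
    ((∀ i j, ∃ z : ℤ, N i j = (z : ℝ)) →
      (∃ z : ℤ, N 0 2 = 2 * (z : ℝ)) ∧ (∃ z : ℤ, N 1 2 = 2 * (z : ℝ))) := by
  simp only [Poho, Fin.sum_univ_three] at h
  have h₀ := h ![1, 0, 0]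
  have h₁ := h ![0, 1, 0]
  have h₂ := h ![0, 0, 1]
  have h₀₂ := h ![1, 0, 1]
  have h₁₂ := h ![0, 1, 1]
  simp only [Matrix.cons_val] at h₀ h₁ h₂ h₀₂ h₁₂
  refine ⟨⟨by linarith, by linarith, by linarith⟩, fun hN => ?_⟩
  choose z hz using hN
  simp only [hz] at h₀ h₁ h₂ h₀₂ h₁₂ ⊢
  refine ⟨⟨(z 0 0 - z 2 0) * (z 0 2 - z 2 2) + (z 1 0 - z 2 0) * (z 1 2 - z 2 2) - z 2 0, ?_⟩,
    ⟨(z 0 1 - z 2 1) * (z 0 2 - z 2 2) + (z 1 1 - z 2 1) * (z 1 2 - z 2 2) - z 2 1, ?_⟩⟩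
  · push_cast
    linarith
  · push_cast
    linarith
end

section
/- The set {(σ1, σ2) ∈ ℝ² : σ1 and σ2 are nonnegative integer multiples of 4 and (σ1 − σ2)² = 4(σ1 + σ2)} equals {(2m(m+1), 2m(m−1)) : m ∈ ℤ} ∪ {(2m(m−1), 2m(m+1)) : m ∈ ℤ}; in particular, Γ₂(1, 1) equals this set. -/
/-- The set `Γ₂(μ₁, μ₂)` of possible local masses for the singular sinh-Gordon equation:
pairs `(σ₁, σ₂)` with `σ_i = 4(n_{i1} μ₁ + n_{i2} μ₂)` for nonnegative integers `n_{ij}`,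
satisfying `(σ₁ − σ₂)² = 4(μ₁ σ₁ + μ₂ σ₂)`. -/
def Gamma2 (μ1 μ2 : ℝ) : Set (ℝ × ℝ) :=
  {p | (∃ n11 n12 n21 n22 : ℕ,
          p.1 = 4 * ((n11 : ℝ) * μ1 + (n12 : ℝ) * μ2) ∧
          p.2 = 4 * ((n21 : ℝ) * μ1 + (n22 : ℝ) * μ2)) ∧
       (p.1 - p.2) ^ 2 = 4 * (μ1 * p.1 + μ2 * p.2)}

/-- For an integer `m`, the product `2m(m+1)` is a nonnegative integer multiple of `4`. -/
theorem exists_nat_two_mul_mul_add_one_eq (m : ℤ) :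
    ∃ a : ℕ, 2 * (m : ℝ) * ((m : ℝ) + 1) = 4 * (a : ℝ) := by
  obtain ⟨k, hk⟩ := (Int.even_mul_succ_self m).two_dvd
  have hk0 : 0 ≤ k := by
    rcases le_or_gt 0 m with h | h <;> nlinarith
  lift k to ℕ using hk0
  refine ⟨k, ?_⟩
  have hk' : (m : ℝ) * (m + 1) = 2 * k := by exact_mod_cast hk
  linarith

/-- For an integer `m`, the product `2m(m-1)` is a nonnegative integer multiple of `4`. -/
theorem exists_nat_two_mul_mul_sub_one_eq (m : ℤ) :
    ∃ a : ℕ, 2 * (m : ℝ) * ((m : ℝ) - 1) = 4 * (a : ℝ) := by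
  obtain ⟨a, ha⟩ := exists_nat_two_mul_mul_add_one_eq (-m)
  refine ⟨a, ?_⟩
  push_cast at ha
  linarith

/-- `Γ₂(1, 1)` consists of the pairs of nonnegative integer multiples of `4` satisfying
`(σ₁ - σ₂)² = 4(σ₁ + σ₂)`. -/
theorem Gamma2_one_one_eq :
    Gamma2 1 1 = {p : ℝ × ℝ | (∃ a : ℕ, p.1 = 4 * (a : ℝ)) ∧ (∃ b : ℕ, p.2 = 4 * (b : ℝ)) ∧
      (p.1 - p.2) ^ 2 = 4 * (p.1 + p.2)} := by
  ext p
  simp only [Gamma2, Set.mem_ofPred_eq, mul_one, one_mul]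
  constructor
  · rintro ⟨⟨n11, n12, n21, n22, h1, h2⟩, h⟩
    exact ⟨⟨n11 + n12, by exact_mod_cast h1⟩, ⟨n21 + n22, by exact_mod_cast h2⟩, h⟩
  · rintro ⟨⟨a, ha⟩, ⟨b, hb⟩, h⟩
    exact ⟨⟨a, 0, b, 0, by simpa using ha, by simpa using hb⟩, h⟩

/-- The nonsingular case: the set of pairs of nonnegative integer multiples of `4` with
`(σ₁ − σ₂)² = 4(σ₁ + σ₂)` equals `{(2m(m+1), 2m(m−1)) : m ∈ ℤ} ∪ {(2m(m−1), 2m(m+1)) : m ∈ ℤ}`;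
in particular `Γ₂(1,1)` equals this set. -/
theorem gamma2_one_one_explicit :
    ({p : ℝ × ℝ | (∃ a : ℕ, p.1 = 4 * (a : ℝ)) ∧ (∃ b : ℕ, p.2 = 4 * (b : ℝ)) ∧
        (p.1 - p.2) ^ 2 = 4 * (p.1 + p.2)} =
      ({p : ℝ × ℝ | ∃ m : ℤ, p = (2 * (m : ℝ) * ((m : ℝ) + 1), 2 * (m : ℝ) * ((m : ℝ) - 1))} ∪
       {p : ℝ × ℝ | ∃ m : ℤ, p = (2 * (m : ℝ) * ((m : ℝ) - 1), 2 * (m : ℝ) * ((m : ℝ) + 1))})) ∧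
    Gamma2 1 1 =
      ({p : ℝ × ℝ | ∃ m : ℤ, p = (2 * (m : ℝ) * ((m : ℝ) + 1), 2 * (m : ℝ) * ((m : ℝ) - 1))} ∪
       {p : ℝ × ℝ | ∃ m : ℤ, p = (2 * (m : ℝ) * ((m : ℝ) - 1), 2 * (m : ℝ) * ((m : ℝ) + 1))}) := by
  rw [Gamma2_one_one_eq, and_self]
  ext ⟨x, y⟩
  simp only [Set.mem_ofPred_eq, Set.mem_union, Prod.mk.injEq]
  constructor
  · rintro ⟨⟨a, rfl⟩, ⟨b, rfl⟩, h⟩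
    refine Or.inl ⟨(a : ℤ) - b, ?_, ?_⟩ <;> push_cast <;> linarith
  · rintro (⟨m, rfl, rfl⟩ | ⟨m, rfl, rfl⟩)
    · exact ⟨exists_nat_two_mul_mul_add_one_eq m, exists_nat_two_mul_mul_sub_one_eq m, by ring⟩
    · exact ⟨exists_nat_two_mul_mul_sub_one_eq m, exists_nat_two_mul_mul_add_one_eq m, by ring⟩
end

section
/- For all nonnegative integers a, b, c: if (a − c)² + (b − c)² = a, then a ≤ 2c + 1 and c ≤ a + b. -/
/-- Quadratic Diophantine lemma (Vieta): for nonnegative integers `a, b, c`, if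
`(a − c)² + (b − c)² = a` then `a ≤ 2c + 1` and `c ≤ a + b`. -/
theorem vieta_lemma_mu1 (a b c : ℕ)
    (h : ((a : ℤ) - c) ^ 2 + ((b : ℤ) - c) ^ 2 = a) :
    a ≤ 2 * c + 1 ∧ c ≤ a + b := by
  constructor
  · by_contra! hlt
    have hlt' : (2 * c + 2 : ℤ) ≤ a := by exact_mod_cast hlt
    nlinarith [sq_nonneg ((b : ℤ) - c), sq_nonneg ((a : ℤ) - c - 1)]
  · by_contra! hlt
    obtain ⟨k, rfl⟩ := Nat.exists_eq_add_of_lt hlt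
    push_cast at h
    nlinarith [sq_nonneg (a : ℤ), sq_nonneg (b + k + 1 : ℤ), sq_nonneg (k : ℤ),
      mul_nonneg (Int.natCast_nonneg a) (Int.natCast_nonneg k),
      mul_nonneg (Int.natCast_nonneg b) (Int.natCast_nonneg k)]
end

section
/- For all nonnegative integers a, b, c: if (a − c)² + (b − c)² = b, then a ≤ 2c and c ≤ a + b. -/
/-- Quadratic Diophantine lemma (Vieta): for nonnegative integers `a, b, c`, if
`(a − c)² + (b − c)² = b` then `a ≤ 2c` and `c ≤ a + b`. -/
theorem vieta_lemma_mu2 (a b c : ℕ)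
    (h : ((a : ℤ) - c) ^ 2 + ((b : ℤ) - c) ^ 2 = b) :
    a ≤ 2 * c ∧ c ≤ a + b := by
  have hac : (a : ℤ) - c ≤ ((a : ℤ) - c) ^ 2 := Int.le_self_sq _
  have hca : -((a : ℤ) - c) ≤ (-((a : ℤ) - c)) ^ 2 := Int.le_self_sq _
  have hbc : (b : ℤ) - c ≤ ((b : ℤ) - c) ^ 2 := Int.le_self_sq _
  rw [neg_sq] at hca
  have hsq : 0 ≤ ((b : ℤ) - c) ^ 2 := sq_nonneg _
  constructor <;> zify <;> linarith
end

section
/- For all nonnegative integers a, b, c: if (a − c)² + (b − c)² = 2c, then c ≤ a + b + 1; if moreover b is even, then a ≤ 2c. -/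
/-- Quadratic Diophantine lemma (Vieta): for nonnegative integers `a, b, c`, if
`(a − c)² + (b − c)² = 2c` then `c ≤ a + b + 1`, and if moreover `b` is even then
`a ≤ 2c`. -/
theorem vieta_lemma_mu3 (a b c : ℕ)
    (h : ((a : ℤ) - c) ^ 2 + ((b : ℤ) - c) ^ 2 = 2 * c) :
    c ≤ a + b + 1 ∧ (Even b → a ≤ 2 * c) := by
  constructor
  · zify
    nlinarith [sq_nonneg ((a : ℤ) - c + 1), sq_nonneg ((b : ℤ) - c + 1)]
  · intro _
    by_contra! hac
    zify at hac
    nlinarith [sq_nonneg ((b : ℤ) - c), sq_nonneg (c : ℤ)]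
end
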